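/- Let $h:\mathbb{R}^3\times\mathbb{R}^3\to\mathbb{R}$, $(y,\xi)\mapsto h(y,\xi)$, be $C^2$, with Hessian blocks $(\nabla_{yy}h)_{ij}=\partial^2h/\partial y_i\partial y_j$, $(\nabla_{y\xi}h)_{ij}=\partial^2h/\partial y_i\partial\xi_j$, $\nabla_{\xi y}h=(\nabla_{y\xi}h)^T$, $(\nabla_{\xi\xi}h)_{ij}=\partial^2h/\partial\xi_i\partial\xi_j$. Let $\varphi=(\varphi_1,\varphi_2,\varphi_3):\mathbb{R}\times\mathbb{R}^3\times\mathbb{R}^3\to\mathbb{C}^3$ be $C^2$ with each component solving the Liouville equation $\partial_t\varphi_k+\nabla_\xi h\cdot\nabla_y\varphi_k-\nabla_yh\cdot\nabla_\xi\varphi_k=0$. Write $\nabla_y\varphi$ and $\nabla_\xi\varphi$ for the $3\times3$ matrices whose columns are the gradients of the components, $(\nabla_y\varphi)_{ij}=\partial\varphi_j/\partial y_i$ and $(\nabla_\xi\varphi)_{ij}=\partial\varphi_j/\partial\xi_i$. Let $t\mapsto(y(t),\xi(t))$ be a bicharacteristic ($y'=\nabla_\xi h$, $\xi'=-\nabla_yh$)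 on an interval $I\subseteq\mathbb{R}$, and suppose that $\nabla_\xi\varphi$ evaluated along the curve, at $(t,y(t),\xi(t))$, is invertible for every $t\in I$. Then $M(t):=-(\nabla_y\varphi)(\nabla_\xi\varphi)^{-1}$, evaluated at $(t,y(t),\xi(t))$, satisfies on $I$ the Riccati equation $$M'=-\nabla_{yy}h-(\nabla_{y\xi}h)M-M(\nabla_{\xi y}h)-M(\nabla_{\xi\xi}h)M$$ along the curve. Moreover, the Gaussian beam Hessian is constructed in this way from the derivatives of the level set functions: if $0\in I$ and $\varphi(0,y,\xi)=-iy+(\xi-\nabla S(y))$ for all $y,\xi$, with $S:\mathbb{R}^3\to\mathbb{R}$ of class $C^2$, then $M(0)=\nabla^2S(y(0))+i\,\mathrm{Id}$, and every solution on $I$ of this Riccati equation along the curve with that initial value coincides with $M$ on $I$. -/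

import Mathlib

/-- Points of `ℝ³`. -/
abbrev V3 := Fin 3 → ℝ

/-- The coordinate direction `i` in the `y`-slot of `ℝ³ × ℝ³`. -/
def ey (i : Fin 3) : V3 × V3 := (Pi.single i 1, 0)

/-- The coordinate direction `i` in the `ξ`-slot of `ℝ³ × ℝ³`. -/
def eXi (i : Fin 3) : V3 × V3 := (0, Pi.single i 1)

/-- `∇_y h ∈ ℝ³`. -/
noncomputable def gradY (h : V3 × V3 → ℝ) (q : V3 × V3) : V3 :=
  fun i => fderiv ℝ h q (ey i)

/-- `∇_ξ h ∈ ℝ³`. -/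
noncomputable def gradXi (h : V3 × V3 → ℝ) (q : V3 × V3) : V3 :=
  fun i => fderiv ℝ h q (eXi i)

/-- `(∇_{yy}h)_{ij} = ∂²h/∂y_i∂y_j`. -/
noncomputable def Hyy (h : V3 × V3 → ℝ) (p : V3 × V3) : Matrix (Fin 3) (Fin 3) ℝ :=
  Matrix.of fun i j => fderiv ℝ (fun q => fderiv ℝ h q (ey j)) p (ey i)

/-- `(∇_{yξ}h)_{ij} = ∂²h/∂y_i∂ξ_j`. -/
noncomputable def Hyxi (h : V3 × V3 → ℝ) (p : V3 × V3) : Matrix (Fin 3) (Fin 3) ℝ :=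
  Matrix.of fun i j => fderiv ℝ (fun q => fderiv ℝ h q (eXi j)) p (ey i)

/-- `(∇_{ξy}h)_{ij} = ∂²h/∂ξ_i∂y_j`; for `C²` functions this is `(∇_{yξ}h)ᵀ`. -/
noncomputable def Hxiy (h : V3 × V3 → ℝ) (p : V3 × V3) : Matrix (Fin 3) (Fin 3) ℝ :=
  Matrix.of fun i j => fderiv ℝ (fun q => fderiv ℝ h q (ey j)) p (eXi i)

/-- `(∇_{ξξ}h)_{ij} = ∂²h/∂ξ_i∂ξ_j`. -/
noncomputable def Hxixi (h : V3 × V3 → ℝ) (p : V3 × V3) : Matrix (Fin 3) (Fin 3) ℝ :=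
  Matrix.of fun i j => fderiv ℝ (fun q => fderiv ℝ h q (eXi j)) p (eXi i)

/-- `∇_yφ` in the gradient convention: `(∇_yφ)_{ij} = ∂φ_j/∂y_i`, that is, the `j`-th column is
the gradient `∇_yφ_j`. -/
noncomputable def nablaY (φ : ℝ × V3 × V3 → Fin 3 → ℂ) (p : ℝ × V3 × V3) :
    Matrix (Fin 3) (Fin 3) ℂ :=
  Matrix.of fun i j => fderiv ℝ φ p (0, ey i) j

/-- `∇_ξφ` in the gradient convention: `(∇_ξφ)_{ij} = ∂φ_j/∂ξ_i`, that is, the `j`-th column is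
the gradient `∇_ξφ_j`. -/
noncomputable def nablaXi (φ : ℝ × V3 × V3 → Fin 3 → ℂ) (p : ℝ × V3 × V3) :
    Matrix (Fin 3) (Fin 3) ℂ :=
  Matrix.of fun i j => fderiv ℝ φ p (0, eXi i) j

/-- Each component of `φ` solves the Liouville equation
`∂_tφ_k + ∇_ξh · ∇_yφ_k − ∇_yh · ∇_ξφ_k = 0`. -/
def SolvesLiouville (h : V3 × V3 → ℝ) (φ : ℝ × V3 × V3 → Fin 3 → ℂ) : Prop :=
  ∀ (p : ℝ × V3 × V3) (k : Fin 3),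
    fderiv ℝ φ p (1, 0) k
      + ∑ i, ((gradXi h p.2 i : ℝ) : ℂ) * fderiv ℝ φ p (0, ey i) k
      - ∑ i, ((gradY h p.2 i : ℝ) : ℂ) * fderiv ℝ φ p (0, eXi i) k = 0

/-- `t ↦ (y t, ξ t)` is a bicharacteristic of `h` on `I`: `y' = ∇_ξh`, `ξ' = −∇_yh`
(one-sided derivatives at endpoints belonging to `I`). -/
def IsBicharacteristicOn (h : V3 × V3 → ℝ) (y ξ : ℝ → V3) (I : Set ℝ) : Prop :=
  ∀ t ∈ I, HasDerivWithinAt y (gradXi h (y t, ξ t)) I t ∧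
    HasDerivWithinAt ξ (-gradY h (y t, ξ t)) I t

/-- The right-hand side `−∇_{yy}h − (∇_{yξ}h) M − M (∇_{ξy}h) − M (∇_{ξξ}h) M`
at the phase-space point `p`. -/
noncomputable def riccatiRHS (h : V3 × V3 → ℝ) (p : V3 × V3) (M : Matrix (Fin 3) (Fin 3) ℂ) :
    Matrix (Fin 3) (Fin 3) ℂ :=
  -(Hyy h p).map Complex.ofReal
    - (Hyxi h p).map Complex.ofReal * M
    - M * (Hxiy h p).map Complex.ofReal
    - M * (Hxixi h p).map Complex.ofReal * M

/-- `M` satisfies the Riccati equation along the curve `(y, ξ)` on `I` (entrywise derivative,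
one-sided at endpoints belonging to `I`). -/
def SolvesRiccatiOn (h : V3 × V3 → ℝ) (y ξ : ℝ → V3) (I : Set ℝ)
    (M : ℝ → Matrix (Fin 3) (Fin 3) ℂ) : Prop :=
  ∀ t ∈ I, ∀ i j : Fin 3,
    HasDerivWithinAt (fun τ => M τ i j) (riccatiRHS h (y t, ξ t) (M t) i j) I t

/-- `M(t) = −(∇_yφ)(∇_ξφ)⁻¹` at `(t, y t, ξ t)`. -/
noncomputable def levelSetHessian (φ : ℝ × V3 × V3 → Fin 3 → ℂ) (y ξ : ℝ → V3) (t : ℝ) :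
    Matrix (Fin 3) (Fin 3) ℂ :=
  -(nablaY φ (t, y t, ξ t) * (nablaXi φ (t, y t, ξ t))⁻¹)

/-- `∇S ∈ ℝ³`. -/
noncomputable def gradS (S : V3 → ℝ) (x : V3) : V3 :=
  fun i => fderiv ℝ S x (Pi.single i 1)

/-- `(∇²S)_{ij} = ∂²S/∂x_i∂x_j`. -/
noncomputable def hessS (S : V3 → ℝ) (x : V3) : Matrix (Fin 3) (Fin 3) ℝ :=
  Matrix.of fun i j => fderiv ℝ (fun z => gradS S z j) x (Pi.single i 1)

/-- The initial beam Hessian `∇²S + i Id`. -/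
noncomputable def initialHessian (S : V3 → ℝ) (x : V3) : Matrix (Fin 3) (Fin 3) ℂ :=
  (hessS S x).map Complex.ofReal + Complex.I • (1 : Matrix (Fin 3) (Fin 3) ℂ)

/-!
Differentiating the Liouville equation `D φ (1, X) = 0`, where `X = (∇_ξ h, -∇_y h)`, and using the
symmetry of `D² φ`, the gradients of `φ` evolve along a bicharacteristic by the linear Hamiltonian
system `(∇_y φ)' = h_yy ∇_ξ φ - h_yξ ∇_y φ`, `(∇_ξ φ)' = h_ξy ∇_ξ φ - h_ξξ ∇_y φ`. The Riccati
equation is the equation satisfied by minus the quotient of the two unknowns of such a system. The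
difference of two of its solutions satisfies a linear equation, so Grönwall's inequality gives
uniqueness.
-/

open Set Filter Topology Matrix

section Gronwall

variable {E : Type*} [NormedAddCommGroup E] [NormedSpace ℝ E] {f f' : ℝ → E} {K : ℝ → ℝ}

theorem eq_zero_of_norm_deriv_le_mul_norm_Icc {a b : ℝ} (hab : a ≤ b)
    (hK : ContinuousOn K (Icc a b))
    (hf : ∀ t ∈ Icc a b, HasDerivWithinAt f (f' t) (Icc a b) t)
    (hbound : ∀ t ∈ Icc a b, ‖f' t‖ ≤ K t * ‖f t‖) (hfa : f a = 0) : f b = 0 := by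
  obtain ⟨C, hC⟩ := isCompact_Icc.bddAbove_image hK
  have hKC : ∀ t ∈ Icc a b, K t ≤ C := fun t ht => hC (mem_image_of_mem K ht)
  refine eq_zero_of_abs_deriv_le_mul_abs_self_of_eq_zero_right (f' := f') (K := C)
    (fun t ht => (hf t ht).continuousWithinAt) (fun t ht => ?_) hfa (fun t ht => ?_)
    b (right_mem_Icc.2 hab)
  · exact (hf t (Ico_subset_Icc_self ht)).mono_of_mem_nhdsWithin (Icc_mem_nhdsGE_of_mem ht)
  · have ht' := Ico_subset_Icc_self ht
    exact (hbound t ht').trans (mul_le_mul_of_nonneg_right (hKC t ht') (norm_nonneg _))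

theorem eqOn_zero_of_norm_deriv_le_mul_norm {I : Set ℝ} (hI : I.OrdConnected) {a : ℝ}
    (ha : a ∈ I) (hK : ContinuousOn K I) (hf : ∀ t ∈ I, HasDerivWithinAt f (f' t) I t)
    (hbound : ∀ t ∈ I, ‖f' t‖ ≤ K t * ‖f t‖) (hfa : f a = 0) : EqOn f 0 I := by
  intro t ht
  rcases le_total a t with hat | hta
  · have hsub : Icc a t ⊆ I := hI.out ha ht
    exact eq_zero_of_norm_deriv_le_mul_norm_Icc hat (hK.mono hsub)
      (fun s hs => (hf s (hsub hs)).mono hsub) (fun s hs => hbound s (hsub hs)) hfa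
  · have hmaps : MapsTo Neg.neg (Icc (-a) (-t)) I := fun s hs =>
      hI.out ht ha ⟨le_neg.1 hs.2, neg_le.1 hs.1⟩
    have hreversed := eq_zero_of_norm_deriv_le_mul_norm_Icc (f := f ∘ Neg.neg)
      (f' := fun s => -f' (-s)) (neg_le_neg hta) (hK.comp continuousOn_neg hmaps)
      (fun s hs => by
        simpa using (hf (-s) (hmaps hs)).scomp s (hasDerivAt_neg s).hasDerivWithinAt hmaps)
      (fun s hs => by simpa using hbound (-s) (hmaps hs)) (by simpa using hfa)
    simpa using hreversed

end Gronwall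

section Riccati

variable {E : Type*}

/-- The right-hand side of the Riccati equation attached to the linear Hamiltonian system
`A' = a B - b A`, `B' = c B - d A`, which `-A B⁻¹` solves. -/
def riccatiField [Ring E] (a b c d x : E) : E :=
  -a - b * x - x * c - x * d * x

theorem riccatiField_sub_riccatiField [Ring E] (a b c d x z : E) :
    riccatiField a b c d x - riccatiField a b c d z
      = -((b + x * d) * (x - z) + (x - z) * (c + d * z)) := by
  simp only [riccatiField]
  noncomm_ring

variable [NormedRing E] [NormedAlgebra ℝ E] {s : Set ℝ} {t : ℝ}

theorem hasDerivWithinAt_ringInverse [HasSummableGeomSeries E] {B : ℝ → E} {B' : E}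
    (hB : HasDerivWithinAt B B' s t) (hunit : IsUnit (B t)) :
    HasDerivWithinAt (fun τ => Ring.inverse (B τ))
      (-(Ring.inverse (B t) * B' * Ring.inverse (B t))) s t := by
  obtain ⟨u, hu⟩ := hunit
  have hinv := hasFDerivAt_ringInverse (𝕜 := ℝ) u
  rw [← Ring.inverse_unit, hu] at hinv
  exact hinv.comp_hasDerivWithinAt t hB

theorem hasDerivWithinAt_neg_mul_ringInverse [HasSummableGeomSeries E] {A B : ℝ → E}
    {a b c d : E} (hA : HasDerivWithinAt A (a * B t - b * A t) s t)
    (hB : HasDerivWithinAt B (c * B t - d * A t) s t) (hunit : IsUnit (B t)) :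
    HasDerivWithinAt (fun τ => -(A τ * Ring.inverse (B τ)))
      (riccatiField a b c d (-(A t * Ring.inverse (B t)))) s t := by
  refine (hA.mul (hasDerivWithinAt_ringInverse hB hunit)).neg.congr_deriv ?_
  have hcancel (x : E) : x * B t * Ring.inverse (B t) = x := by
    rw [mul_assoc, Ring.mul_inverse_cancel _ hunit, mul_one]
  simp only [riccatiField, mul_sub, sub_mul, ← mul_assoc, hcancel, mul_neg, neg_mul]
  abel

theorem eqOn_of_hasDerivWithinAt_riccatiField {I : Set ℝ} (hI : I.OrdConnected)
    {a b c d M N : ℝ → E} (hb : ContinuousOn b I) (hc : ContinuousOn c I) (hd : ContinuousOn d I)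
    (hM : ∀ t ∈ I, HasDerivWithinAt M (riccatiField (a t) (b t) (c t) (d t) (M t)) I t)
    (hN : ∀ t ∈ I, HasDerivWithinAt N (riccatiField (a t) (b t) (c t) (d t) (N t)) I t)
    {t₀ : ℝ} (ht₀ : t₀ ∈ I) (heq : M t₀ = N t₀) : EqOn M N I := by
  have hMcont : ContinuousOn M I := fun t ht => (hM t ht).continuousWithinAt
  have hNcont : ContinuousOn N I := fun t ht => (hN t ht).continuousWithinAt
  have hdiff : EqOn (M - N) 0 I := by
    refine eqOn_zero_of_norm_deriv_le_mul_norm hI ht₀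
      (K := fun t => ‖b t + M t * d t‖ + ‖c t + d t * N t‖)
      ((hb.add (hMcont.mul hd)).norm.add (hc.add (hd.mul hNcont)).norm)
      (fun t ht => (hM t ht).sub (hN t ht)) (fun t _ => ?_) (sub_eq_zero.2 heq)
    rw [riccatiField_sub_riccatiField, norm_neg, Pi.sub_apply]
    calc ‖(b t + M t * d t) * (M t - N t) + (M t - N t) * (c t + d t * N t)‖
        ≤ ‖b t + M t * d t‖ * ‖M t - N t‖ + ‖M t - N t‖ * ‖c t + d t * N t‖ :=
          norm_add_le_of_le (norm_mul_le _ _) (norm_mul_le _ _)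
      _ = (‖b t + M t * d t‖ + ‖c t + d t * N t‖) * ‖M t - N t‖ := by ring
  exact fun t ht => sub_eq_zero.1 (hdiff ht)

end Riccati

section SecondDerivatives

variable {E F : Type*} [NormedAddCommGroup E] [NormedSpace ℝ E] [NormedAddCommGroup F]
  [NormedSpace ℝ F]

theorem fderiv_fderiv_apply_of_fderiv_apply_eq_zero {φ : E → F} {X : E → E} {X' : E →L[ℝ] E}
    {p : E} (hφ : ContDiffAt ℝ 2 φ p) (hX : HasFDerivAt X X' p)
    (hzero : ∀ᶠ q in 𝓝 p, fderiv ℝ φ q (X q) = 0) (v : E) :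
    fderiv ℝ (fderiv ℝ φ) p (X p) v = -fderiv ℝ φ p (X' v) := by
  have hφ' : HasFDerivAt (fderiv ℝ φ) (fderiv ℝ (fderiv ℝ φ) p) p :=
    ((hφ.fderiv_right (m := 1) le_rfl).differentiableAt one_ne_zero).hasFDerivAt
  have hprod : fderiv ℝ φ p (X' v) + fderiv ℝ (fderiv ℝ φ) p v (X p) = 0 :=
    DFunLike.congr_fun ((hφ'.clm_apply hX).unique
      ((hasFDerivAt_const 0 p).congr_of_eventuallyEq hzero)) v
  have hsymm : IsSymmSndFDerivAt ℝ φ p := hφ.isSymmSndFDerivAt (by simp)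
  rw [hsymm, eq_neg_of_add_eq_zero_right hprod]

theorem hasDerivWithinAt_fderiv_apply_of_fderiv_apply_eq_zero {φ : E → F} {X : E → E}
    {X' : E →L[ℝ] E} {γ : ℝ → E} {s : Set ℝ} {t : ℝ} (hφ : ContDiffAt ℝ 2 φ (γ t))
    (hX : HasFDerivAt X X' (γ t)) (hzero : ∀ᶠ q in 𝓝 (γ t), fderiv ℝ φ q (X q) = 0)
    (hγ : HasDerivWithinAt γ (X (γ t)) s t) (v : E) :
    HasDerivWithinAt (fun τ => fderiv ℝ φ (γ τ) v) (-fderiv ℝ φ (γ t) (X' v)) s t := by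
  have hφ' : HasFDerivAt (fderiv ℝ φ) (fderiv ℝ (fderiv ℝ φ) (γ t)) (γ t) :=
    ((hφ.fderiv_right (m := 1) le_rfl).differentiableAt one_ne_zero).hasFDerivAt
  rw [← fderiv_fderiv_apply_of_fderiv_apply_eq_zero hφ hX hzero v]
  simpa using (hφ'.comp_hasDerivWithinAt t hγ).clm_apply (hasDerivWithinAt_const t s v)

theorem contDiff_fderiv_apply_const {f : E → F} (hf : ContDiff ℝ 2 f) (v : E) :
    ContDiff ℝ 1 fun q => fderiv ℝ f q v :=
  (hf.fderiv_right le_rfl).clm_apply contDiff_const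

theorem continuous_matrix_fderiv_fderiv {m n : Type*} {f : E → F} (hf : ContDiff ℝ 2 f)
    (v : m → E) (w : n → E) :
    Continuous fun x => Matrix.of fun i j => fderiv ℝ (fun q => fderiv ℝ f q (w j)) x (v i) :=
  continuous_matrix fun _ j =>
    ((contDiff_fderiv_apply_const hf (w j)).continuous_fderiv one_ne_zero).clm_apply
      continuous_const

end SecondDerivatives

section HamiltonianField

variable {h : V3 × V3 → ℝ}

/-- The Hamiltonian vector field `(∇_ξ h, -∇_y h)`, whose integral curves are the
bicharacteristics of `h`. -/
noncomputable def hamiltonianField (h : V3 × V3 → ℝ) (q : V3 × V3) : V3 × V3 :=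
  (gradXi h q, -gradY h q)

theorem hasFDerivAt_hamiltonianField (hh : ContDiff ℝ 2 h) (q : V3 × V3) :
    HasFDerivAt (hamiltonianField h)
      ((ContinuousLinearMap.pi fun j => fderiv ℝ (fun p => fderiv ℝ h p (eXi j)) q).prod
        (-ContinuousLinearMap.pi fun j => fderiv ℝ (fun p => fderiv ℝ h p (ey j)) q)) q := by
  have hpartial (v : V3 × V3) : HasFDerivAt (fun p => fderiv ℝ h p v)
      (fderiv ℝ (fun p => fderiv ℝ h p v) q) q :=
    ((contDiff_fderiv_apply_const hh v).differentiable one_ne_zero q).hasFDerivAt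
  exact (hasFDerivAt_pi.2 fun j => hpartial (eXi j)).prodMk
    (hasFDerivAt_pi.2 fun j => hpartial (ey j)).neg

theorem fderiv_hamiltonianField_ey (hh : ContDiff ℝ 2 h) (q : V3 × V3) (i : Fin 3) :
    fderiv ℝ (hamiltonianField h) q (ey i) = (Hyxi h q i, -Hyy h q i) := by
  rw [(hasFDerivAt_hamiltonianField hh q).fderiv]
  rfl

theorem fderiv_hamiltonianField_eXi (hh : ContDiff ℝ 2 h) (q : V3 × V3) (i : Fin 3) :
    fderiv ℝ (hamiltonianField h) q (eXi i) = (Hxixi h q i, -Hxiy h q i) := by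
  rw [(hasFDerivAt_hamiltonianField hh q).fderiv]
  rfl

variable {I : Set ℝ} {y ξ : ℝ → V3}

theorem IsBicharacteristicOn.hasDerivWithinAt_graph (hbi : IsBicharacteristicOn h y ξ I) {t : ℝ}
    (ht : t ∈ I) :
    HasDerivWithinAt (fun τ => (τ, y τ, ξ τ)) (1, hamiltonianField h (y t, ξ t)) I t :=
  (hasDerivWithinAt_id t I).prodMk ((hbi t ht).1.prodMk (hbi t ht).2)

theorem IsBicharacteristicOn.continuousOn (hbi : IsBicharacteristicOn h y ξ I) :
    ContinuousOn (fun t => (y t, ξ t)) I := fun t ht =>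
  (hbi t ht).1.continuousWithinAt.prodMk (hbi t ht).2.continuousWithinAt

end HamiltonianField

section Liouville

variable {h : V3 × V3 → ℝ} {φ : ℝ × V3 × V3 → Fin 3 → ℂ}

theorem sum_smul_ey_add_sum_smul_eXi (w : V3 × V3) :
    ∑ i, w.1 i • ey i + ∑ i, w.2 i • eXi i = w := by
  ext k <;> simp [ey, eXi, Prod.fst_sum, Prod.snd_sum, Finset.sum_apply, Pi.single_apply]

theorem fderiv_apply_zero_prodMk (φ : ℝ × V3 × V3 → Fin 3 → ℂ) (p : ℝ × V3 × V3)
    (w : V3 × V3) :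
    fderiv ℝ φ p (0, w)
      = (fun i => (w.1 i : ℂ)) ᵥ* nablaY φ p + (fun i => (w.2 i : ℂ)) ᵥ* nablaXi φ p := by
  have hexpand := congrArg (fderiv ℝ φ p ∘L ContinuousLinearMap.inr ℝ ℝ (V3 × V3))
    (sum_smul_ey_add_sum_smul_eXi w)
  simp only [map_add, map_sum, map_smul, ContinuousLinearMap.comp_apply,
    ContinuousLinearMap.inr_apply] at hexpand
  rw [← hexpand]
  ext k
  simp [vecMul, dotProduct, nablaY, nablaXi]

theorem SolvesLiouville.fderiv_apply_eq_zero (hl : SolvesLiouville h φ) (p : ℝ × V3 × V3) :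
    fderiv ℝ φ p (1, hamiltonianField h p.2) = 0 := by
  have hsplit : ((1 : ℝ), hamiltonianField h p.2) = (1, 0) + (0, hamiltonianField h p.2) := by
    simp
  ext k
  rw [Pi.zero_apply, ← hl p k, hsplit, map_add, fderiv_apply_zero_prodMk]
  simp only [hamiltonianField, nablaY, Pi.neg_apply, Complex.ofReal_neg, nablaXi, Pi.add_apply,
    vecMul, dotProduct, of_apply, neg_mul, Finset.sum_neg_distrib]
  ring

variable {I : Set ℝ} {y ξ : ℝ → V3} {t : ℝ}

theorem SolvesLiouville.hasDerivWithinAt_fderiv_apply (hl : SolvesLiouville h φ)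
    (hh : ContDiff ℝ 2 h) (hφ : ContDiff ℝ 2 φ) (hbi : IsBicharacteristicOn h y ξ I)
    (ht : t ∈ I) (v : V3 × V3) :
    HasDerivWithinAt (fun τ => fderiv ℝ φ (τ, y τ, ξ τ) (0, v))
      (-fderiv ℝ φ (t, y t, ξ t) (0, fderiv ℝ (hamiltonianField h) (y t, ξ t) v)) I t := by
  have hX : HasFDerivAt (fun q : ℝ × V3 × V3 => ((1 : ℝ), hamiltonianField h q.2)) _
      (t, y t, ξ t) :=
    (hasFDerivAt_const 1 _).prodMk
      ((hasFDerivAt_hamiltonianField hh _).differentiableAt.hasFDerivAt.comp _ hasFDerivAt_snd)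
  exact hasDerivWithinAt_fderiv_apply_of_fderiv_apply_eq_zero hφ.contDiffAt hX
    (Eventually.of_forall hl.fderiv_apply_eq_zero) (hbi.hasDerivWithinAt_graph ht) (0, v)

end Liouville

section BeamHessian

theorem hasDerivWithinAt_matrix_iff_row {𝕜 α m n : Type*} [NontriviallyNormedField 𝕜]
    [NormedAddCommGroup α] [NormedSpace 𝕜 α] [Finite n] {M : 𝕜 → Matrix m n α}
    {M' : Matrix m n α} {s : Set 𝕜} {t : 𝕜} :
    HasDerivWithinAt M M' s t ↔ ∀ i, HasDerivWithinAt (fun τ => M τ i) (M' i) s t := by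
  cases nonempty_fintype n
  exact hasDerivWithinAt_pi (E' := fun _ : m => n → α)

open scoped Matrix.Norms.Operator

variable {h : V3 × V3 → ℝ} {φ : ℝ × V3 × V3 → Fin 3 → ℂ} {I : Set ℝ} {y ξ : ℝ → V3}

theorem SolvesLiouville.hasDerivWithinAt_nablaY (hl : SolvesLiouville h φ)
    (hh : ContDiff ℝ 2 h) (hφ : ContDiff ℝ 2 φ) (hbi : IsBicharacteristicOn h y ξ I) {t : ℝ}
    (ht : t ∈ I) :
    HasDerivWithinAt (fun τ => nablaY φ (τ, y τ, ξ τ))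
      ((Hyy h (y t, ξ t)).map Complex.ofReal * nablaXi φ (t, y t, ξ t)
        - (Hyxi h (y t, ξ t)).map Complex.ofReal * nablaY φ (t, y t, ξ t)) I t := by
  refine hasDerivWithinAt_matrix_iff_row.2 fun i =>
    (hl.hasDerivWithinAt_fderiv_apply hh hφ hbi ht (ey i)).congr_deriv ?_
  rw [fderiv_hamiltonianField_ey hh, fderiv_apply_zero_prodMk]
  ext j
  simp only [Pi.neg_apply, Complex.ofReal_neg, Pi.add_apply, vecMul, dotProduct, neg_mul,
    Finset.sum_neg_distrib, neg_add_rev, neg_neg, Matrix.sub_apply, Matrix.mul_apply, map_apply]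
  ring

theorem SolvesLiouville.hasDerivWithinAt_nablaXi (hl : SolvesLiouville h φ)
    (hh : ContDiff ℝ 2 h) (hφ : ContDiff ℝ 2 φ) (hbi : IsBicharacteristicOn h y ξ I) {t : ℝ}
    (ht : t ∈ I) :
    HasDerivWithinAt (fun τ => nablaXi φ (τ, y τ, ξ τ))
      ((Hxiy h (y t, ξ t)).map Complex.ofReal * nablaXi φ (t, y t, ξ t)
        - (Hxixi h (y t, ξ t)).map Complex.ofReal * nablaY φ (t, y t, ξ t)) I t := by
  refine hasDerivWithinAt_matrix_iff_row.2 fun i =>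
    (hl.hasDerivWithinAt_fderiv_apply hh hφ hbi ht (eXi i)).congr_deriv ?_
  rw [fderiv_hamiltonianField_eXi hh, fderiv_apply_zero_prodMk]
  ext j
  simp only [Pi.neg_apply, Complex.ofReal_neg, Pi.add_apply, vecMul, dotProduct, neg_mul,
    Finset.sum_neg_distrib, neg_add_rev, neg_neg, Matrix.sub_apply, Matrix.mul_apply, map_apply]
  ring

theorem solvesRiccatiOn_iff {M : ℝ → Matrix (Fin 3) (Fin 3) ℂ} :
    SolvesRiccatiOn h y ξ I M ↔ ∀ t ∈ I, HasDerivWithinAt M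
      (riccatiField ((Hyy h (y t, ξ t)).map Complex.ofReal)
        ((Hyxi h (y t, ξ t)).map Complex.ofReal) ((Hxiy h (y t, ξ t)).map Complex.ofReal)
        ((Hxixi h (y t, ξ t)).map Complex.ofReal) (M t)) I t := by
  simp only [hasDerivWithinAt_matrix_iff_row, hasDerivWithinAt_pi]
  rfl

theorem SolvesLiouville.solvesRiccatiOn_levelSetHessian (hl : SolvesLiouville h φ)
    (hh : ContDiff ℝ 2 h) (hφ : ContDiff ℝ 2 φ) (hbi : IsBicharacteristicOn h y ξ I)
    (hinv : ∀ t ∈ I, IsUnit (nablaXi φ (t, y t, ξ t))) :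
    SolvesRiccatiOn h y ξ I (levelSetHessian φ y ξ) := by
  have hquotient : levelSetHessian φ y ξ = fun τ =>
      -(nablaY φ (τ, y τ, ξ τ) * Ring.inverse (nablaXi φ (τ, y τ, ξ τ))) :=
    funext fun τ => by rw [levelSetHessian, nonsing_inv_eq_ringInverse]
  rw [hquotient, solvesRiccatiOn_iff]
  exact fun t ht =>
    hasDerivWithinAt_neg_mul_ringInverse (A := fun τ => nablaY φ (τ, y τ, ξ τ))
      (B := fun τ => nablaXi φ (τ, y τ, ξ τ)) (hl.hasDerivWithinAt_nablaY hh hφ hbi ht)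
      (hl.hasDerivWithinAt_nablaXi hh hφ hbi ht) (hinv t ht)

theorem SolvesRiccatiOn.eqOn (hh : ContDiff ℝ 2 h) (hbi : IsBicharacteristicOn h y ξ I)
    (hI : I.OrdConnected) {M N : ℝ → Matrix (Fin 3) (Fin 3) ℂ} (hM : SolvesRiccatiOn h y ξ I M)
    (hN : SolvesRiccatiOn h y ξ I N) {t₀ : ℝ} (ht₀ : t₀ ∈ I) (heq : M t₀ = N t₀) :
    EqOn M N I := by
  have hblock (v w : Fin 3 → V3 × V3) : ContinuousOn (fun t => (Matrix.of fun i j =>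
      fderiv ℝ (fun q => fderiv ℝ h q (w j)) (y t, ξ t) (v i)).map Complex.ofReal) I :=
    ((continuous_matrix_fderiv_fderiv hh v w).matrix_map
      Complex.continuous_ofReal).comp_continuousOn hbi.continuousOn
  exact eqOn_of_hasDerivWithinAt_riccatiField hI (hblock ey eXi) (hblock eXi ey)
    (hblock eXi eXi) (solvesRiccatiOn_iff.1 hM) (solvesRiccatiOn_iff.1 hN) ht₀ heq

end BeamHessian

section InitialData

theorem fderiv_apply_zero_prodMk_eq_fderiv_slice {𝕜 E F G : Type*} [NontriviallyNormedField 𝕜]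
    [NormedAddCommGroup E] [NormedSpace 𝕜 E] [NormedAddCommGroup F] [NormedSpace 𝕜 F]
    [NormedAddCommGroup G] [NormedSpace 𝕜 G] {f : E × F → G} {a : E} {b : F}
    (hf : DifferentiableAt 𝕜 f (a, b)) (v : F) :
    fderiv 𝕜 f (a, b) (0, v) = fderiv 𝕜 (fun x => f (a, x)) b v :=
  DFunLike.congr_fun (hf.hasFDerivAt.comp b (hasFDerivAt_prodMk_right a b)).fderiv.symm v

variable {S : V3 → ℝ} {φ : ℝ × V3 × V3 → Fin 3 → ℂ} {t : ℝ}

/-- The initial level set function `-i y + (ξ - ∇S(y))` of a Gaussian beam with phase `S`. -/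
noncomputable def beamLevelSet (S : V3 → ℝ) (q : V3 × V3) : Fin 3 → ℂ :=
  fun k => -Complex.I * ((q.1 k : ℝ) : ℂ) + ((q.2 k - gradS S q.1 k : ℝ) : ℂ)

theorem differentiable_gradS (hS : ContDiff ℝ 2 S) : Differentiable ℝ (gradS S) :=
  differentiable_pi.2 fun i =>
    (contDiff_fderiv_apply_const hS (Pi.single i 1)).differentiable one_ne_zero

theorem fderiv_beamLevelSet {q : V3 × V3} (hS : DifferentiableAt ℝ (gradS S) q.1) (v : V3 × V3)
    (k : Fin 3) :
    fderiv ℝ (beamLevelSet S) q v k = -Complex.I * ((v.1 k : ℝ) : ℂ)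
      + ((v.2 k - fderiv ℝ (fun z => gradS S z k) q.1 v.1 : ℝ) : ℂ) := by
  have hy (k : Fin 3) := (ContinuousLinearMap.proj k ∘L ContinuousLinearMap.fst ℝ V3 V3).hasFDerivAt
    (x := q)
  have hξ (k : Fin 3) := (ContinuousLinearMap.proj k ∘L ContinuousLinearMap.snd ℝ V3 V3).hasFDerivAt
    (x := q)
  have hgrad (k : Fin 3) := (differentiableAt_pi.1 hS k).hasFDerivAt.comp q hasFDerivAt_fst
  have hbeam : HasFDerivAt (beamLevelSet S) _ q := hasFDerivAt_pi.2 fun k =>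
    ((Complex.ofRealCLM.hasFDerivAt.comp q (hy k)).const_mul (-Complex.I)).add
      (Complex.ofRealCLM.hasFDerivAt.comp q ((hξ k).sub (hgrad k)))
  rw [hbeam.fderiv]
  simp

theorem nablaXi_eq_one_of_eq_beamLevelSet {q : V3 × V3}
    (hφ : DifferentiableAt ℝ φ (t, q)) (hS : DifferentiableAt ℝ (gradS S) q.1)
    (hinit : ∀ q, φ (t, q) = beamLevelSet S q) :
    nablaXi φ (t, q) = 1 := by
  ext i j
  simp [nablaXi, fderiv_apply_zero_prodMk_eq_fderiv_slice hφ, hinit, fderiv_beamLevelSet hS, eXi,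
    Matrix.one_apply, Pi.single_apply, eq_comm (a := j), apply_ite Complex.ofReal]

theorem nablaY_eq_neg_initialHessian_of_eq_beamLevelSet {q : V3 × V3}
    (hφ : DifferentiableAt ℝ φ (t, q)) (hS : DifferentiableAt ℝ (gradS S) q.1)
    (hinit : ∀ q, φ (t, q) = beamLevelSet S q) :
    nablaY φ (t, q) = -initialHessian S q.1 := by
  ext i j
  simp [nablaY, fderiv_apply_zero_prodMk_eq_fderiv_slice hφ, hinit, fderiv_beamLevelSet hS, ey,
    initialHessian, hessS, Matrix.one_apply, Pi.single_apply, eq_comm (a := j), add_comm,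
    apply_ite Complex.ofReal, apply_ite fun z : ℂ => -z]

theorem levelSetHessian_eq_initialHessian_of_eq_beamLevelSet {y ξ : ℝ → V3}
    (hφ : DifferentiableAt ℝ φ (t, y t, ξ t)) (hS : DifferentiableAt ℝ (gradS S) (y t))
    (hinit : ∀ q, φ (t, q) = beamLevelSet S q) :
    levelSetHessian φ y ξ t = initialHessian S (y t) := by
  rw [levelSetHessian, nablaXi_eq_one_of_eq_beamLevelSet hφ hS hinit,
    nablaY_eq_neg_initialHessian_of_eq_beamLevelSet hφ hS hinit, inv_one, mul_one, neg_neg]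

end InitialData

/-- First part: `M = −(∇_yφ)(∇_ξφ)⁻¹` satisfies the Riccati equation along the bicharacteristic.
Second part: for the level set initial data `φ(0,y,ξ) = −iy + (ξ − ∇S(y))` it is the Gaussian beam
Hessian, i.e. the one solution of the Riccati equation with initial value `∇²S(y(0)) + i Id`. -/
theorem hessian_from_level_set_riccati
    (h : V3 × V3 → ℝ) (hh : ContDiff ℝ 2 h)
    (φ : ℝ × V3 × V3 → Fin 3 → ℂ) (hφ : ContDiff ℝ 2 φ)
    (hliou : SolvesLiouville h φ)
    (I : Set ℝ) (hI : I.OrdConnected)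
    (y ξ : ℝ → V3) (hbi : IsBicharacteristicOn h y ξ I)
    (hinv : ∀ t ∈ I, IsUnit (nablaXi φ (t, y t, ξ t))) :
    SolvesRiccatiOn h y ξ I (levelSetHessian φ y ξ) ∧
    (∀ S : V3 → ℝ, ContDiff ℝ 2 S → (0 : ℝ) ∈ I →
      (∀ (x η : V3) (k : Fin 3),
        φ (0, x, η) k = -Complex.I * ((x k : ℝ) : ℂ) + ((η k - gradS S x k : ℝ) : ℂ)) →
      levelSetHessian φ y ξ 0 = initialHessian S (y 0) ∧
      ∀ N : ℝ → Matrix (Fin 3) (Fin 3) ℂ, SolvesRiccatiOn h y ξ I N →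
        N 0 = initialHessian S (y 0) →
        ∀ t ∈ I, N t = levelSetHessian φ y ξ t) := by
  have hM := hliou.solvesRiccatiOn_levelSetHessian hh hφ hbi hinv
  refine ⟨hM, fun S hS h0I hinit => ?_⟩
  have hM0 : levelSetHessian φ y ξ 0 = initialHessian S (y 0) :=
    levelSetHessian_eq_initialHessian_of_eq_beamLevelSet (hφ.differentiable two_ne_zero _)
      (differentiable_gradS hS _) (fun q => funext (hinit q.1 q.2))
  exact ⟨hM0, fun N hN hN0 => hN.eqOn hh hbi hI hM h0I (hN0.trans hM0.symm)⟩
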